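/- Let H be a real separable Hilbert space, let c > 0, and let v_1, ..., v_n and w_1, ..., w_n be elements of H with ||v_i|| <= c and ||w_i|| <= c for all i. Define the operators C_v(x) = n^{-1} * sum over i = 1..n of <v_i, x> v_i and C_w(x) = n^{-1} * sum over i = 1..n of <w_i, x> w_i. Then C_v - C_w is Hilbert-Schmidt and its Hilbert-Schmidt norm satisfies ||C_v - C_w||_S <= 2c * max over 1 <= i <= n of ||v_i - w_i||. -/

import Mathlib

open scoped RealInnerProductSpace

/-- For vectors `v i`, `w i` in a real separable Hilbert space `H` with
`‖v i‖ ≤ c` and `‖w i‖ ≤ c`, the difference of the empirical covariance-type operators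
`C_v x = n⁻¹ ∑ᵢ ⟪v i, x⟫ v i` and `C_w x = n⁻¹ ∑ᵢ ⟪w i, x⟫ w i` is Hilbert–Schmidt and
its Hilbert–Schmidt norm (computed in the orthonormal basis `e`) is bounded by
`2 c * max ᵢ ‖v i - w i‖`. -/
theorem hilbertSchmidt_norm_diff_cov_le
    {H : Type*} [NormedAddCommGroup H] [InnerProductSpace ℝ H] [CompleteSpace H]
    (e : HilbertBasis ℕ ℝ H)
    (n : ℕ) (hn : 0 < n) (c : ℝ) (hc : 0 < c)
    (v w : Fin n → H)
    (hv : ∀ i, ‖v i‖ ≤ c) (hw : ∀ i, ‖w i‖ ≤ c)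
    (Cv Cw : H → H)
    (hCv : ∀ x, Cv x = (n : ℝ)⁻¹ • ∑ i, ⟪v i, x⟫ • v i)
    (hCw : ∀ x, Cw x = (n : ℝ)⁻¹ • ∑ i, ⟪w i, x⟫ • w i) :
    Summable (fun k => ‖Cv (e k) - Cw (e k)‖ ^ 2) ∧
      Real.sqrt (∑' k, ‖Cv (e k) - Cw (e k)‖ ^ 2) ≤ 2 * c * ⨆ i, ‖v i - w i‖ := by
  set M : ℝ := ⨆ i, ‖v i - w i‖ with hM
  have hd : ∀ i, ‖v i - w i‖ ≤ M := fun i =>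
    le_ciSup (f := fun i => ‖v i - w i‖) (Set.finite_range _).bddAbove i
  have hM0 : 0 ≤ M := le_trans (norm_nonneg _) (hd ⟨0, hn⟩)
  have hn' : (0 : ℝ) < n := by exact_mod_cast hn
  have hB : ∀ (s : Finset ℕ) (x : H), ∑ k ∈ s, ⟪x, e k⟫ ^ 2 ≤ ‖x‖ ^ 2 := by
    intro s x
    have h := e.orthonormal.sum_inner_products_le (s := s) x
    simpa [real_inner_comm] using h
  have hk : ∀ k, ‖Cv (e k) - Cw (e k)‖ ^ 2 ≤
      (n : ℝ)⁻¹ * ∑ i, (2 * M ^ 2 * ⟪v i, e k⟫ ^ 2 + 2 * c ^ 2 * ⟪v i - w i, e k⟫ ^ 2) := by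
    intro k
    have h1 : Cv (e k) - Cw (e k) =
        (n : ℝ)⁻¹ • ∑ i, (⟪v i, e k⟫ • (v i - w i) + ⟪v i - w i, e k⟫ • w i) := by
      rw [hCv, hCw, ← smul_sub, ← Finset.sum_sub_distrib]
      congr 1
      refine Finset.sum_congr rfl fun i _ => ?_
      rw [inner_sub_left]
      module
    have h2 : ‖∑ i, (⟪v i, e k⟫ • (v i - w i) + ⟪v i - w i, e k⟫ • w i)‖ ≤
        ∑ i, (|⟪v i, e k⟫| * M + |⟪v i - w i, e k⟫| * c) := by
      refine (norm_sum_le _ _).trans (Finset.sum_le_sum fun i _ => ?_)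
      refine (norm_add_le _ _).trans ?_
      rw [norm_smul, norm_smul, Real.norm_eq_abs, Real.norm_eq_abs]
      gcongr
      · exact hd i
      · exact hw i
    have h3 : (∑ i, (|⟪v i, e k⟫| * M + |⟪v i - w i, e k⟫| * c)) ^ 2 ≤
        n * ∑ i, (2 * M ^ 2 * ⟪v i, e k⟫ ^ 2 + 2 * c ^ 2 * ⟪v i - w i, e k⟫ ^ 2) := by
      refine (sq_sum_le_card_mul_sum_sq).trans ?_
      rw [Finset.card_univ, Fintype.card_fin]
      gcongr with i _
      rw [← sq_abs ⟪v i, e k⟫, ← sq_abs ⟪v i - w i, e k⟫]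
      nlinarith [sq_nonneg (|⟪v i, e k⟫| * M - |⟪v i - w i, e k⟫| * c)]
    have h4 := (pow_le_pow_left₀ (norm_nonneg _) h2 2).trans h3
    rw [h1, norm_smul, mul_pow, Real.norm_eq_abs, sq_abs]
    calc _ ≤ ((n : ℝ)⁻¹) ^ 2 * (n * ∑ i, (2 * M ^ 2 * ⟪v i, e k⟫ ^ 2
            + 2 * c ^ 2 * ⟪v i - w i, e k⟫ ^ 2)) := by gcongr
      _ = _ := by field_simp
  have hs : ∀ s : Finset ℕ, ∑ k ∈ s, ‖Cv (e k) - Cw (e k)‖ ^ 2 ≤ (2 * c * M) ^ 2 := by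
    intro s
    refine (Finset.sum_le_sum fun k _ => hk k).trans ?_
    rw [← Finset.mul_sum, Finset.sum_comm]
    have h5 : ∀ i, ∑ k ∈ s, (2 * M ^ 2 * ⟪v i, e k⟫ ^ 2 + 2 * c ^ 2 * ⟪v i - w i, e k⟫ ^ 2)
        ≤ (2 * c * M) ^ 2 := by
      intro i
      rw [Finset.sum_add_distrib, ← Finset.mul_sum, ← Finset.mul_sum]
      have a := (hB s (v i)).trans (pow_le_pow_left₀ (norm_nonneg _) (hv i) 2)
      have b := (hB s (v i - w i)).trans (pow_le_pow_left₀ (norm_nonneg _) (hd i) 2)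
      have a' := mul_le_mul_of_nonneg_left a (by positivity : 0 ≤ 2 * M ^ 2)
      have b' := mul_le_mul_of_nonneg_left b (by positivity : 0 ≤ 2 * c ^ 2)
      linarith
    calc _ ≤ (n : ℝ)⁻¹ * ∑ _i : Fin n, (2 * c * M) ^ 2 := by
          gcongr with i _
          exact h5 i
      _ = _ := by
          rw [Finset.sum_const, Finset.card_univ, Fintype.card_fin, nsmul_eq_mul]
          field_simp
  have hsum := summable_of_sum_le (fun k => sq_nonneg ‖Cv (e k) - Cw (e k)‖) hs
  exact ⟨hsum, Real.sqrt_le_iff.mpr ⟨by positivity, hsum.tsum_le_of_sum_le hs⟩⟩
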